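/- (Growth and Lipschitz estimates for Tf_hom) There exists a constant C > 0 such that: α|ξ| ≤ Tf_hom(s,ξ) ≤ β(1+|ξ|) and |Tf_hom(s,ξ) − Tf_hom(s,ξ′)| ≤ C|ξ−ξ′| for every s ∈ M and all ξ, ξ′ ∈ [T_s M]^N. Moreover, extending Tf_hom to all of ℝ^d × ℝ^{d×N} by the homogenized density g_hom of the modified integrand g, there exists C₁ > 0 such that |Tf_hom(s,ξ) − Tf_hom(s′,ξ)| ≤ C₁|s−s′|(1+|ξ|) for every s, s′ ∈ ℝ^d and ξ ∈ ℝ^{d×N}; in particular Tf_hom is continuous. -/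

import Mathlib

open MeasureTheory Filter Set
open scoped ENNReal RealInnerProductSpace Topology NNReal

noncomputable section

/-- Euclidean space `ℝ^N`. -/
abbrev EN (N : ℕ) : Type := EuclideanSpace ℝ (Fin N)

/-- `d × N` matrices, viewed as continuous linear maps `ℝ^N → ℝ^d`. -/
abbrev Mat (d N : ℕ) : Type := EN N →L[ℝ] EN d

variable {N d : ℕ}

/-- The tangent set of `M ⊆ ℝ^d` at `s`: velocities of curves in `M` through `s`. -/
def TangentSet (M : Set (EN d)) (s : EN d) : Set (EN d) :=
  {v | ∃ γ : ℝ → EN d, (∀ t, γ t ∈ M) ∧ γ 0 = s ∧ HasDerivAt γ v 0}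

/-- A matrix `ξ ∈ ℝ^{d×N}` has all its columns in the tangent space `T_s M`,
i.e. `ξ ∈ [T_s M]^N`. -/
def TangentCols (M : Set (EN d)) (s : EN d) (ξ : Mat d N) : Prop :=
  ∀ i : Fin N, ξ (EuclideanSpace.single i 1) ∈ TangentSet M s

/-- `T` is a smooth `m`-dimensional submanifold (without boundary) of `ℝ^n`,
described locally as a regular level set. -/
def IsSubmanifoldDim (n m : ℕ) (T : Set (EN n)) : Prop :=
  ∀ x ∈ T, ∃ (U : Set (EN n)) (F : EN n → EN (n - m)),
    IsOpen U ∧ x ∈ U ∧ ContDiffOn ℝ (⊤ : ℕ∞) F U ∧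
    (T ∩ U = {y ∈ U | F y = 0}) ∧ ∀ y ∈ U, Function.Surjective (fderiv ℝ F y)

/-- `M` is a nonempty compact connected smooth submanifold of `ℝ^d` without boundary. -/
def IsNiceManifold (d : ℕ) (M : Set (EN d)) : Prop :=
  M.Nonempty ∧ IsCompact M ∧ IsConnected M ∧ ∃ m : ℕ, m ≤ d ∧ IsSubmanifoldDim d m M

/-- A finite union of subsets of `(N-2)`-dimensional submanifolds of `ℝ^N`. -/
def IsSigmaSet (N : ℕ) (Sg : Set (EN N)) : Prop :=
  ∃ (k : ℕ) (S : Fin k → Set (EN N)), Sg = ⋃ i, S i ∧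
    ∀ i, ∃ T : Set (EN N), IsSubmanifoldDim N (N - 2) T ∧ S i ⊆ T

/-- `u ∈ W^{1,1}(A;ℝ^d)` with weak gradient `Du`. -/
def MemW11 (A : Set (EN N)) (u : EN N → EN d) (Du : EN N → Mat d N) : Prop :=
  IntegrableOn u A volume ∧ IntegrableOn Du A volume ∧
    ∀ φ : EN N → ℝ, ContDiff ℝ (⊤ : ℕ∞) φ → HasCompactSupport φ → tsupport φ ⊆ A →
      ∀ y : EN N, ∫ x in A, fderiv ℝ φ x y • u x = - ∫ x in A, φ x • Du x y

/-- `u` takes values in `M` almost everywhere on `A`. -/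
def AeIn (A : Set (EN N)) (u : EN N → EN d) (M : Set (EN d)) : Prop :=
  ∀ᵐ x ∂(volume.restrict A), u x ∈ M

/-- Recession function of `h : ℝ^{d×N} → ℝ`: `h^∞(ξ) = limsup_{t→∞} h(tξ)/t`. -/
def recc (h : Mat d N → ℝ) (ξ : Mat d N) : ℝ :=
  Filter.limsup (fun t : ℝ => h (t • ξ) / t) Filter.atTop

/-- The open cube `(0,t)^N`. -/
def posCube (N : ℕ) (t : ℝ) : Set (EN N) := {x | ∀ i, x i ∈ Set.Ioo (0 : ℝ) t}

/-- The open unit cube `(-1/2,1/2)^N`. -/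
def unitCube (N : ℕ) : Set (EN N) := {x | ∀ i, x i ∈ Set.Ioo (-(1/2) : ℝ) (1/2)}

/-- The cell infimum over `W^{1,∞}_0((0,t)^N; T_s M)` defining `Tf_hom`. -/
def tanCell (f : EN N → Mat d N → ℝ) (M : Set (EN d)) (s : EN d) (ξ : Mat d N)
    (t : ℝ) : ℝ :=
  sInf {c : ℝ | ∃ (φ : EN N → EN d) (K : ℝ≥0), LipschitzWith K φ ∧
    (∀ x, φ x ∈ TangentSet M s) ∧ (∀ x, x ∉ posCube N t → φ x = 0) ∧
    c = (t ^ N)⁻¹ * ∫ x in posCube N t, f x (ξ + fderiv ℝ φ x)}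

/-- The tangentially homogenized density `Tf_hom` (the limit as `t → ∞`,
realized as a limsup). -/
def Tfhom (f : EN N → Mat d N → ℝ) (M : Set (EN d)) (s : EN d) (ξ : Mat d N) : ℝ :=
  Filter.limsup (fun t => tanCell f M s ξ t) Filter.atTop

/-- The unconstrained cell infimum over `W^{1,∞}_0((0,t)^N; ℝ^d)`. -/
def freeCell (h : EN N → Mat d N → ℝ) (ξ : Mat d N) (t : ℝ) : ℝ :=
  sInf {c : ℝ | ∃ (φ : EN N → EN d) (K : ℝ≥0), LipschitzWith K φ ∧
    (∀ x, x ∉ posCube N t → φ x = 0) ∧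
    c = (t ^ N)⁻¹ * ∫ x in posCube N t, h x (ξ + fderiv ℝ φ x)}

/-- The usual homogenized density of a parametrized integrand `g(y,s,ξ)`. -/
def ghomOf (g : EN N → EN d → Mat d N → ℝ) (s : EN d) (ξ : Mat d N) : ℝ :=
  Filter.limsup (fun t => freeCell (fun y => g y s) ξ t) Filter.atTop

/-- The open cube of side `t` centered at the origin adapted to the
orthonormal basis `B`. -/
def obCube (B : OrthonormalBasis (Fin N) ℝ (EN N)) (t : ℝ) : Set (EN N) :=
  {x | ∀ i, ⟪x, B i⟫ ∈ Set.Ioo (-(t / 2)) (t / 2)}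

/-- Surface cell infimum at scale `t`: infimum of `t^{1-N} ∫_{tQ_ν} h(y,∇φ)` over
`φ ∈ W^{1,1}(tQ_ν;M)` with `φ = a` on `∂(tQ_ν) ∩ {x·ν₁ > 0}` and `φ = b`
on `∂(tQ_ν) ∩ {x·ν₁ ≤ 0}`. -/
def surfCell (h : EN N → Mat d N → ℝ) (M : Set (EN d)) (a b : EN d) (ν₁ : EN N)
    (B : OrthonormalBasis (Fin N) ℝ (EN N)) (t : ℝ) : ℝ :=
  sInf {c : ℝ | ∃ (φ : EN N → EN d) (Dφ : EN N → Mat d N),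
    MemW11 (obCube B t) φ Dφ ∧ AeIn (obCube B t) φ M ∧
    (∀ x ∈ frontier (obCube B t),
      (0 < ⟪x, ν₁⟫ → φ x = a) ∧ (⟪x, ν₁⟫ ≤ 0 → φ x = b)) ∧
    c = (t ^ (N - 1))⁻¹ * ∫ x in obCube B t, h x (Dφ x)}

/-- Surface cell infimum where moreover the adapted cube is chosen with two of
its faces orthogonal to `ν₁`. -/
def thetaCell (h : EN N → Mat d N → ℝ) (M : Set (EN d)) (a b : EN d) (ν₁ : EN N)
    (t : ℝ) : ℝ :=
  sInf {c : ℝ | ∃ B : OrthonormalBasis (Fin N) ℝ (EN N), (∃ i, B i = ν₁) ∧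
    c = surfCell h M a b ν₁ B t}

/-- The homogenized surface energy density `θ_hom` (built from `f^∞`). -/
def thetaHom (f : EN N → Mat d N → ℝ) (M : Set (EN d)) (a b : EN d) (ν₁ : EN N) : ℝ :=
  Filter.limsup (fun t => thetaCell (fun y => recc (f y)) M a b ν₁ t) Filter.atTop

/-- Strong `L¹(A;ℝ^d)`-convergence of a family `v ε → u` as `ε → 0⁺`. -/
def TendstoL1 (A : Set (EN N)) (v : ℝ → EN N → EN d) (u : EN N → EN d) : Prop :=
  Filter.Tendsto (fun ε => ∫ x in A, ‖v ε x - u x‖) (nhdsWithin 0 (Set.Ioi 0)) (nhds 0)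

/-- Γ-convergence as `ε → 0⁺` of the family `Fε` at the point `u`
(for the strong `L¹(A)`-topology) to the value `c`. -/
def GammaConvergesAt (Fε : ℝ → (EN N → EN d) → ℝ≥0∞) (A : Set (EN N))
    (u : EN N → EN d) (c : ℝ≥0∞) : Prop :=
  (∀ v : ℝ → EN N → EN d, TendstoL1 A v u →
      c ≤ Filter.liminf (fun ε => Fε ε (v ε)) (nhdsWithin 0 (Set.Ioi 0))) ∧
  (∃ v : ℝ → EN N → EN d, TendstoL1 A v u ∧
      Filter.limsup (fun ε => Fε ε (v ε)) (nhdsWithin 0 (Set.Ioi 0)) ≤ c)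

/-- The localized functional `F_ε(u,A) = ∫_A f(x/ε,∇u) dx` if
`u ∈ W^{1,1}(A;M)`, and `+∞` otherwise. -/
def FepsSet (f : EN N → Mat d N → ℝ) (M : Set (EN d)) (ε : ℝ) (u : EN N → EN d)
    (A : Set (EN N)) : ℝ≥0∞ :=
  ⨅ (Du : EN N → Mat d N) (_ : MemW11 A u Du ∧ AeIn A u M),
    ENNReal.ofReal (∫ x in A, f (ε⁻¹ • x) (Du x))

/-- The localized Γ-lower limit
`F(u,A) = inf { liminf_n F_{ε_n}(u_n,A) : u_n → u in L¹(A) }`. -/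
def GammaLow (f : EN N → Mat d N → ℝ) (M : Set (EN d)) (εseq : ℕ → ℝ)
    (u : EN N → EN d) (A : Set (EN N)) : ℝ≥0∞ :=
  ⨅ (v : ℕ → EN N → EN d)
    (_ : Filter.Tendsto (fun n => ∫ x in A, ‖v n x - u x‖) Filter.atTop (nhds 0)),
    Filter.liminf (fun n => FepsSet f M (εseq n) (v n) A) Filter.atTop

/-- Extension of `F(u,·)` to arbitrary sets `B ⊆ Ω` by outer regularity. -/
def GammaLowB (f : EN N → Mat d N → ℝ) (M : Set (EN d)) (εseq : ℕ → ℝ)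
    (u : EN N → EN d) (Ω B : Set (EN N)) : ℝ≥0∞ :=
  ⨅ (A : Set (EN N)) (_ : IsOpen A ∧ A ⊆ Ω ∧ B ⊆ A), GammaLow f M εseq u A

/-- A package certifying `u ∈ BV(Ω;ℝ^d)`, with all its measure-theoretic
attributes: absolutely continuous gradient `grad = ∇u`, approximate
discontinuity (jump) set `S`, traces `up = u⁺`, `um = u⁻`, normal `nu = ν_u`,
approximate limit `ap = ũ`, Cantor part `cm = |D^c u|` with polar density
`cd = dD^cu/d|D^cu|`. -/
structure BVPack (Ω : Set (EN N)) (u : EN N → EN d) where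
  grad : EN N → Mat d N
  S : Set (EN N)
  up : EN N → EN d
  um : EN N → EN d
  nu : EN N → EN N
  ap : EN N → EN d
  cm : Measure (EN N)
  cd : EN N → Mat d N
  integrable : IntegrableOn u Ω volume
  grad_int : IntegrableOn grad Ω volume
  S_meas : MeasurableSet S
  cm_fin : cm Set.univ ≠ ⊤
  cm_in : cm Ωᶜ = 0
  jump_int : IntegrableOn (fun x => ‖up x - um x‖) (Ω ∩ S) (μH[(N : ℝ) - 1])
  nu_unit : ∀ x ∈ S, ‖nu x‖ = 1
  jump_ne : ∀ x ∈ S, up x ≠ um x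
  cd_unit : ∀ᵐ x ∂cm, ‖cd x‖ = 1
  cm_sing : cm ⟂ₘ (volume : Measure (EN N))
  cm_nojump : cm S = 0
  ap_lim : ∀ x ∈ Ω \ S,
    Filter.Tendsto
      (fun r : ℝ => (volume (Metric.ball x r)).toReal⁻¹ *
        ∫ y in Metric.ball x r, ‖u y - ap x‖)
      (nhdsWithin 0 (Set.Ioi 0)) (nhds 0)
  jump_lim_up : ∀ x ∈ Ω ∩ S,
    Filter.Tendsto
      (fun r : ℝ => (volume (Metric.ball x r)).toReal⁻¹ *
        ∫ y in {y ∈ Metric.ball x r | 0 < ⟪y - x, nu x⟫}, ‖u y - up x‖)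
      (nhdsWithin 0 (Set.Ioi 0)) (nhds 0)
  jump_lim_um : ∀ x ∈ Ω ∩ S,
    Filter.Tendsto
      (fun r : ℝ => (volume (Metric.ball x r)).toReal⁻¹ *
        ∫ y in {y ∈ Metric.ball x r | ⟪y - x, nu x⟫ < 0}, ‖u y - um x‖)
      (nhdsWithin 0 (Set.Ioi 0)) (nhds 0)
  decomp : ∀ φ : EN N → ℝ, ContDiff ℝ (⊤ : ℕ∞) φ → HasCompactSupport φ → tsupport φ ⊆ Ω →
    ∀ y : EN N,
      ∫ x in Ω, fderiv ℝ φ x y • u x =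
        -(∫ x in Ω, φ x • grad x y) - (∫ x, φ x • cd x y ∂cm) -
          ∫ x in Ω ∩ S, (⟪nu x, y⟫ * φ x) • (up x - um x) ∂(μH[(N : ℝ) - 1])

/-- The total variation measure `|Du|` associated to a BV package. -/
def totalVar (Ω : Set (EN N)) (u : EN N → EN d) (P : BVPack Ω u) : Measure (EN N) :=
  ((volume.restrict Ω).withDensity fun x => ENNReal.ofReal ‖P.grad x‖) + P.cm +
    ((μH[(N : ℝ) - 1]).restrict (Ω ∩ P.S)).withDensity
      fun x => ENNReal.ofReal ‖P.up x - P.um x‖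

/-- The standing assumptions (Carathéodory, (H1), (H2), (H3)) on the
integrand `f`. -/
structure StdIntegrand (N d : ℕ) (f : EN N → Mat d N → ℝ) (α β L : ℝ) : Prop where
  meas : ∀ ξ : Mat d N, Measurable fun y => f y ξ
  nonneg : ∀ y ξ, 0 ≤ f y ξ
  periodic : ∀ (y : EN N) (ξ : Mat d N) (i : Fin N),
    f (y + EuclideanSpace.single i 1) ξ = f y ξ
  alpha_pos : 0 < α
  alpha_le_beta : α ≤ β
  growth : ∀ᵐ y ∂(volume : Measure (EN N)), ∀ ξ,
    α * ‖ξ‖ ≤ f y ξ ∧ f y ξ ≤ β * (1 + ‖ξ‖)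
  lip_pos : 0 < L
  lip : ∀ᵐ y ∂(volume : Measure (EN N)), ∀ ξ ξ', |f y ξ - f y ξ'| ≤ L * ‖ξ - ξ'‖

/-- Hypothesis (H4): `|f(y,ξ) - f^∞(y,ξ)| ≤ C(1+|ξ|^{1-q})`. -/
def H4 (f : EN N → Mat d N → ℝ) (C q : ℝ) : Prop :=
  0 < C ∧ 0 < q ∧ q < 1 ∧
    ∀ᵐ y ∂(volume : Measure (EN N)), ∀ ξ,
      |f y ξ - recc (f y) ξ| ≤ C * (1 + ‖ξ‖ ^ (1 - q))

/-- The projection data used to build the modified integrand `g`: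
`pr` is the nearest-point projection onto `M` on a `δ₀`-neighborhood,
`tanProj s` is the orthogonal projection of `ℝ^d` onto `T_s M` (for `s ∈ M`),
and `chi` is the smooth cut-off. -/
structure ProjData {d : ℕ} (M : Set (EN d)) where
  δ₀ : ℝ
  pr : EN d → EN d
  chi : EN d → ℝ
  tanProj : EN d → EN d →L[ℝ] EN d
  δ₀_pos : 0 < δ₀
  pr_mem : ∀ s, Metric.infDist s M < δ₀ → pr s ∈ M
  pr_nearest : ∀ s, Metric.infDist s M < δ₀ → ‖s - pr s‖ = Metric.infDist s M
  pr_lip : ∃ K : ℝ≥0, LipschitzOnWith K pr {s | Metric.infDist s M < δ₀}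
  tanProj_lip : ∃ K : ℝ≥0,
    LipschitzOnWith K (fun s => tanProj (pr s)) {s | Metric.infDist s M < δ₀}
  chi_smooth : ContDiff ℝ (⊤ : ℕ∞) chi
  chi_supp : HasCompactSupport chi
  chi_range : ∀ s, chi s ∈ Set.Icc (0 : ℝ) 1
  chi_one : ∀ s, Metric.infDist s M ≤ δ₀ / 2 → chi s = 1
  chi_zero : ∀ s, 3 * δ₀ / 4 ≤ Metric.infDist s M → chi s = 0
  tanProj_mem : ∀ s ∈ M, ∀ v, tanProj s v ∈ TangentSet M s
  tanProj_id : ∀ s ∈ M, ∀ v ∈ TangentSet M s, tanProj s v = v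
  tanProj_symm : ∀ s ∈ M, ∀ v w, ⟪tanProj s v, w⟫ = ⟪v, tanProj s w⟫

/-- The cut-off tangential projection `ℙ_s(ξ) = χ(s) P_{Π(s)} ∘ ξ`. -/
def tanP {M : Set (EN d)} (D : ProjData M) (s : EN d) (ξ : Mat d N) : Mat d N :=
  D.chi s • ((D.tanProj (D.pr s)).comp ξ)

/-- The modified integrand `g(y,s,ξ) = f(y,ℙ_s(ξ)) + |ξ - ℙ_s(ξ)|`. -/
def gOf {M : Set (EN d)} (D : ProjData M) (f : EN N → Mat d N → ℝ) :
    EN N → EN d → Mat d N → ℝ :=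
  fun y s ξ => f y (tanP D s ξ) + ‖ξ - tanP D s ξ‖

/-- The geodesic distance on `M`. -/
def geoDist (M : Set (EN d)) (a b : EN d) : ℝ :=
  sInf {l : ℝ | ∃ γ : ℝ → EN d, ContDiff ℝ (⊤ : ℕ∞) γ ∧ (∀ t, γ t ∈ M) ∧
    γ 0 = b ∧ γ 1 = a ∧ l = ∫ t in Set.Icc (0 : ℝ) 1, ‖deriv γ t‖}

/-- The class `G(a,b)` of geodesic curves between `a` and `b`. -/
def GeodClass (M : Set (EN d)) (a b : EN d) : Set (ℝ → EN d) :=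
  {γ | ContDiff ℝ (⊤ : ℕ∞) γ ∧ (∀ t, γ t ∈ M) ∧ (∀ t : ℝ, 1 / 2 ≤ t → γ t = a) ∧
    (∀ t : ℝ, t ≤ -(1 / 2 : ℝ) → γ t = b) ∧
    (∫ t : ℝ, ‖deriv γ t‖) = geoDist M a b}

/-- `I_ε(a,b,ν)`: infimum of `∫_{Q_ν} h(x/ε,∇u)` over the geodesic-boundary
class `B_ε(a,b,ν)`. -/
def Ieps (h : EN N → Mat d N → ℝ) (M : Set (EN d)) (a b : EN d) (ν₁ : EN N)
    (B : OrthonormalBasis (Fin N) ℝ (EN N)) (ε : ℝ) : ℝ :=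
  sInf {c : ℝ | ∃ (φ : EN N → EN d) (Dφ : EN N → Mat d N) (γ : ℝ → EN d),
    γ ∈ GeodClass M a b ∧ MemW11 (obCube B 1) φ Dφ ∧ AeIn (obCube B 1) φ M ∧
    (∀ x ∈ frontier (obCube B 1), φ x = γ (⟪x, ν₁⟫ / ε)) ∧
    c = ∫ x in obCube B 1, h (ε⁻¹ • x) (Dφ x)}

/-- `J_ε(a,b,ν)`: infimum of `∫_{Q_ν} h(x/ε,∇u)` with sharp-interface boundary
datum `u_{a,b,ν}`. -/
def Jeps (h : EN N → Mat d N → ℝ) (M : Set (EN d)) (a b : EN d) (ν₁ : EN N)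
    (B : OrthonormalBasis (Fin N) ℝ (EN N)) (ε : ℝ) : ℝ :=
  sInf {c : ℝ | ∃ (φ : EN N → EN d) (Dφ : EN N → Mat d N),
    MemW11 (obCube B 1) φ Dφ ∧ AeIn (obCube B 1) φ M ∧
    (∀ x ∈ frontier (obCube B 1),
      (0 < ⟪x, ν₁⟫ → φ x = a) ∧ (⟪x, ν₁⟫ ≤ 0 → φ x = b)) ∧
    c = ∫ x in obCube B 1, h (ε⁻¹ • x) (Dφ x)}

/-- The defining properties of the interfacial density `K` from the integral
representation on partitions. -/
def IsJumpRepr (Ω : Set (EN N)) (f : EN N → Mat d N → ℝ) (M : Set (EN d))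
    (εseq : ℕ → ℝ) (K : EN d → EN d → EN N → ℝ) : Prop :=
  (∀ a ∈ M, ∀ b ∈ M, ∀ ν₁ : EN N, ‖ν₁‖ = 1 → 0 ≤ K a b ν₁) ∧
  (∀ a ∈ M, ∀ b ∈ M, ContinuousOn (K a b) (Metric.sphere (0 : EN N) 1)) ∧
  (∀ a ∈ M, ∀ b ∈ M, ∀ ν₁ : EN N, ‖ν₁‖ = 1 → K a b ν₁ = K b a (-ν₁)) ∧
  (∀ T : Finset (EN d), (T : Set (EN d)) ⊆ M →
    ∀ (u : EN N → EN d) (P : BVPack Ω u),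
      (∀ᵐ x ∂(volume.restrict Ω), u x ∈ (T : Set (EN d))) →
      ∀ S : Set (EN N), MeasurableSet S → S ⊆ Ω ∩ P.S →
        GammaLowB f M εseq u Ω S =
          ENNReal.ofReal
            (∫ x in S, K (P.up x) (P.um x) (P.nu x) ∂(μH[(N : ℝ) - 1])))

end

/-!
The cell energy of a competitor `φ` is the mean of `h(·, ξ + ∇φ)` over the cell. A Lipschitz
function vanishing outside the cell has a gradient of mean zero, so by Jensen's inequality the mean
of `|ξ + ∇φ|` is at least `|ξ|`; this gives the lower growth bound, and testing with `φ = 0` gives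
the upper one. Lipschitz continuity in `ξ` holds for each competitor separately. For the dependence
on `s`, an `s`-perturbation changes the integrand by at most `κ|η|` with `κ` proportional to
`|s - s'|`; by coercivity this changes every cell energy by at most `κ / a` times itself, and the
cell infimum is at most `b(1 + |ξ|)`. All these estimates survive the `limsup` over the cells.
-/

section InfimumLimsup

lemma abs_ciInf_sub_ciInf_le {ι : Sort*} [Nonempty ι] {u v : ι → ℝ} {c : ℝ}
    (hu : BddBelow (range u)) (hv : BddBelow (range v)) (h : ∀ i, |u i - v i| ≤ c) :
    |iInf u - iInf v| ≤ c := by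
  refine abs_sub_le_iff.2 ⟨sub_le_iff_le_add.2 ?_, sub_le_iff_le_add.2 ?_⟩
  · rw [← sub_le_iff_le_add']
    exact le_ciInf fun i => by linarith [ciInf_le hu i, (abs_sub_le_iff.1 (h i)).1]
  · rw [← sub_le_iff_le_add']
    exact le_ciInf fun i => by linarith [ciInf_le hv i, (abs_sub_le_iff.1 (h i)).2]

variable {ι : Type*} {l : Filter ι} [l.NeBot] {u v : ι → ℝ} {c : ℝ}

lemma limsup_le_limsup_add_of_eventually_le (hu : IsBoundedUnder (· ≥ ·) l u)
    (hv : IsBoundedUnder (· ≤ ·) l v) (hv' : IsBoundedUnder (· ≥ ·) l v)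
    (h : ∀ᶠ i in l, u i ≤ v i + c) : limsup u l ≤ limsup v l + c := by
  rw [← limsup_add_const l v c hv hv'.isCoboundedUnder_le]
  exact limsup_le_limsup h hu.isCoboundedUnder_le
    (isBoundedUnder_le_add hv isBoundedUnder_const)

lemma abs_limsup_sub_limsup_le (hu : IsBoundedUnder (· ≤ ·) l u) (hu' : IsBoundedUnder (· ≥ ·) l u)
    (hv : IsBoundedUnder (· ≤ ·) l v) (hv' : IsBoundedUnder (· ≥ ·) l v)
    (h : ∀ᶠ i in l, |u i - v i| ≤ c) : |limsup u l - limsup v l| ≤ c := by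
  refine abs_sub_le_iff.2 ⟨sub_le_iff_le_add'.2 ?_, sub_le_iff_le_add'.2 ?_⟩
  · exact limsup_le_limsup_add_of_eventually_le hu' hv hv'
      (h.mono fun i hi => sub_le_iff_le_add'.1 (abs_sub_le_iff.1 hi).1)
  · exact limsup_le_limsup_add_of_eventually_le hv' hu hu'
      (h.mono fun i hi => sub_le_iff_le_add'.1 (abs_sub_le_iff.1 hi).2)

end InfimumLimsup

section Caratheodory

lemma aestronglyMeasurable_comp_of_ae_continuous {X Y Z : Type*} [MeasurableSpace X]
    [TopologicalSpace Y] [TopologicalSpace.MetrizableSpace Y] [SecondCountableTopology Y]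
    [MeasurableSpace Y] [OpensMeasurableSpace Y] [TopologicalSpace Z]
    [TopologicalSpace.PseudoMetrizableSpace Z] [SecondCountableTopology Z] [MeasurableSpace Z]
    [BorelSpace Z] [Nonempty Z] {μ : Measure X} {h : X → Y → Z}
    (hmeas : ∀ y, Measurable fun x => h x y) (hcont : ∀ᵐ x ∂μ, Continuous (h x))
    {Φ : X → Y} (hΦ : Measurable Φ) : AEStronglyMeasurable (fun x => h x (Φ x)) μ := by
  classical
  obtain ⟨A, hA, hAmeas, hAnull⟩ := exists_measurable_superset_of_null hcont
  obtain ⟨z⟩ := ‹Nonempty Z›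
  let u : Y → X → Z := fun y x => if x ∈ A then z else h x y
  have hu_cont (x : X) : Continuous fun y => u y x := by
    by_cases hx : x ∈ A
    · simpa only [u, hx, if_true] using continuous_const
    · have hcont_x : Continuous (h x) := not_not.1 fun hc => hx (hA hc)
      simpa only [u, hx, if_false] using hcont_x
  have hu_meas (y : Y) : Measurable (u y) := Measurable.ite hAmeas measurable_const (hmeas y)
  have huΦ : Measurable fun x => u (Φ x) x :=
    (measurable_uncurry_of_continuous_of_measurable hu_cont hu_meas).comp
      (hΦ.prodMk measurable_id)
  refine ⟨_, huΦ.stronglyMeasurable, ?_⟩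
  filter_upwards [measure_eq_zero_iff_ae_notMem.1 hAnull] with x hx
  simp only [u, hx, if_false]

end Caratheodory

open scoped ProbabilityTheory

section CellDomain

variable {X : Type*} [PseudoMetricSpace X] [MeasurableSpace X] {μ : Measure X} {Ω : Set X}

/-- The sets used as cells in the cell problems: bounded sets of positive measure whose frontier is
negligible, so that averaging over the cell and over its closure agree. -/
structure IsCellDomain (μ : Measure X) (Ω : Set X) : Prop where
  isBounded : Bornology.IsBounded Ω
  measure_ne_zero : μ Ω ≠ 0
  measure_frontier : μ (frontier Ω) = 0

lemma IsCellDomain.isProbabilityMeasure_cond [ProperSpace X] [IsFiniteMeasureOnCompacts μ]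
    (hΩ : IsCellDomain μ Ω) : IsProbabilityMeasure μ[|Ω] :=
  ProbabilityTheory.cond_isProbabilityMeasure_of_finite hΩ.measure_ne_zero
    hΩ.isBounded.measure_lt_top.ne

end CellDomain

section Competitors

variable {E F : Type*} [NormedAddCommGroup E] [NormedAddCommGroup F] {S : Set F}

/-- The class `W^{1,∞}_0(Ω; S)` of competitors in the cell problem, realised by the Lipschitz
functions on the whole space with values in `S` that vanish outside `Ω`. -/
def cellCompetitors (S : Set F) (Ω : Set E) : Set (E → F) :=
  {φ | (∃ K, LipschitzWith K φ) ∧ (∀ x, φ x ∈ S) ∧ ∀ x ∉ Ω, φ x = 0}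

lemma zero_mem_cellCompetitors (hS : 0 ∈ S) (Ω : Set E) : 0 ∈ cellCompetitors S Ω :=
  ⟨⟨0, LipschitzWith.const 0⟩, fun _ => hS, fun _ _ => rfl⟩

end Competitors

section CellProblem

variable {E F : Type*} [NormedAddCommGroup E] [NormedSpace ℝ E] [FiniteDimensional ℝ E]
  [MeasurableSpace E] [BorelSpace E] [NormedAddCommGroup F] [NormedSpace ℝ F]
  [FiniteDimensional ℝ F] {μ : Measure E}

section MeanGradient

variable [μ.IsAddHaarMeasure] {φ : E → F} {K : ℝ≥0} {Ω : Set E}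

lemma integral_lineDeriv_eq_zero_of_lipschitzWith {g : E → ℝ} (hg : LipschitzWith K g)
    (hc : HasCompactSupport g) (v : E) : ∫ x, lineDeriv ℝ g x v ∂μ = 0 := by
  simpa [lineDeriv] using
    ((LipschitzWith.const (1 : ℝ)).integral_lineDeriv_mul_eq (μ := μ) hg hc (-v)).symm

lemma integrable_fderiv_of_lipschitzWith (hφ : LipschitzWith K φ) (hc : HasCompactSupport φ) :
    Integrable (fderiv ℝ φ) μ := by
  have hintOn : IntegrableOn (fderiv ℝ φ) (tsupport φ) μ :=
    Measure.integrableOn_of_bounded (M := K) hc.measure_lt_top.ne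
      (measurable_fderiv ℝ φ).aestronglyMeasurable
      (Eventually.of_forall fun _ => norm_fderiv_le_of_lipschitz ℝ hφ)
  exact IntegrableOn.integrable_of_forall_notMem_eq_zero (f := fderiv ℝ φ) hintOn
    fun _ => fderiv_of_notMem_tsupport ℝ

lemma integral_fderiv_eq_zero_of_lipschitzWith (hφ : LipschitzWith K φ)
    (hc : HasCompactSupport φ) : ∫ x, fderiv ℝ φ x ∂μ = 0 := by
  have hφ_int := integrable_fderiv_of_lipschitzWith (μ := μ) hφ hc
  ext v
  refine SeparatingDual.eq_zero_of_forall_dual_eq_zero (R := ℝ) fun ℓ => ?_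
  have hderiv : ∀ᵐ x ∂μ, ℓ (fderiv ℝ φ x v) = lineDeriv ℝ (ℓ ∘ φ) x v := by
    filter_upwards [hφ.ae_differentiableAt] with x hx
    exact ((ℓ.hasFDerivAt.comp x hx.hasFDerivAt).hasLineDerivAt v).lineDeriv.symm
  rw [ContinuousLinearMap.integral_apply hφ_int,
    ← ℓ.integral_comp_comm (hφ_int.apply_continuousLinearMap v), integral_congr_ae hderiv]
  exact integral_lineDeriv_eq_zero_of_lipschitzWith (ℓ.lipschitz.comp hφ)
    (hc.comp_left (map_zero ℓ)) v

lemma IsCellDomain.integral_cond_fderiv_eq_zero (hΩ : IsCellDomain μ Ω) (hφ : LipschitzWith K φ)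
    (hzero : ∀ x ∉ Ω, φ x = 0) : ∫ x, fderiv ℝ φ x ∂μ[|Ω] = 0 := by
  have htsupport : tsupport φ ⊆ closure Ω :=
    closure_mono fun x hx => not_not.1 fun hxΩ => hx (hzero x hxΩ)
  have hcompact : HasCompactSupport φ :=
    hΩ.isBounded.isCompact_closure.of_isClosed_subset (isClosed_tsupport φ) htsupport
  have hset : ∫ x in Ω, fderiv ℝ φ x ∂μ = 0 := by
    rw [← setIntegral_congr_set (closure_ae_eq_of_null_frontier hΩ.measure_frontier),
      setIntegral_eq_integral_of_forall_compl_eq_zero,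
      integral_fderiv_eq_zero_of_lipschitzWith hφ hcompact]
    exact fun x hx => fderiv_of_notMem_tsupport ℝ fun hx' => hx (htsupport hx')
  rw [ProbabilityTheory.cond, integral_smul_measure, hset, smul_zero]

end MeanGradient

/-- Integrands `h(y, ξ)`, measurable in `y`, with the growth and Lipschitz conditions (H2) and (H3)
of the integrands of homogenization theory: `a|ξ| ≤ h(y, ξ) ≤ b(1 + |ξ|)` with `a > 0`, and
`L`-Lipschitz in `ξ`, for almost every `y`. -/
structure IsLinearGrowthIntegrand (μ : Measure E) (h : E → (E →L[ℝ] F) → ℝ) (a b : ℝ)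
    (L : ℝ≥0) : Prop where
  measurable : ∀ ξ, Measurable fun y => h y ξ
  pos : 0 < a
  growth : ∀ᵐ y ∂μ, ∀ ξ, a * ‖ξ‖ ≤ h y ξ ∧ h y ξ ≤ b * (1 + ‖ξ‖)
  lipschitz : ∀ᵐ y ∂μ, LipschitzWith L (h y)

/-- The energy of `φ` in the cell problem: the mean over `Ω` of `h(x, ξ + ∇φ(x))`, written as an
integral with respect to the normalised restriction `μ[|Ω]` of `μ`. -/
noncomputable def cellEnergy (μ : Measure E) (h : E → (E →L[ℝ] F) → ℝ) (Ω : Set E)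
    (ξ : E →L[ℝ] F) (φ : E → F) : ℝ :=
  ∫ x, h x (ξ + fderiv ℝ φ x) ∂μ[|Ω]

/-- The value of the cell problem on `Ω`, with competitors in `W^{1,∞}_0(Ω; S)`. -/
noncomputable def cellInf (μ : Measure E) (h : E → (E →L[ℝ] F) → ℝ) (S : Set F) (Ω : Set E)
    (ξ : E →L[ℝ] F) : ℝ :=
  ⨅ φ : cellCompetitors S Ω, cellEnergy μ h Ω ξ φ

/-- The homogenized density of `h` along a family of cells `Ω i`, for competitors with values in
`S`; the limit of the cell problems is realised as a `limsup`. -/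
noncomputable def homDensity {ι : Type*} (μ : Measure E) (h : E → (E →L[ℝ] F) → ℝ) (S : Set F)
    (Ω : ι → Set E) (l : Filter ι) (ξ : E →L[ℝ] F) : ℝ :=
  limsup (fun i => cellInf μ h S (Ω i) ξ) l

variable {h h' : E → (E →L[ℝ] F) → ℝ} {a b : ℝ} {L : ℝ≥0} {S : Set F} {Ω : Set E}
  {φ : E → F} {κ : ℝ}

lemma integrable_add_fderiv {ν : Measure E} [IsFiniteMeasure ν] {K : ℝ≥0}
    (hφ : LipschitzWith K φ) (ξ : E →L[ℝ] F) : Integrable (fun x => ξ + fderiv ℝ φ x) ν :=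
  (integrable_const ξ).add <| Integrable.of_bound (measurable_fderiv ℝ φ).aestronglyMeasurable K
    (Eventually.of_forall fun _ => norm_fderiv_le_of_lipschitz ℝ hφ)

lemma IsLinearGrowthIntegrand.integrable (hh : IsLinearGrowthIntegrand μ h a b L)
    {ν : Measure E} [IsFiniteMeasure ν] (hν : ν ≪ μ) {K : ℝ≥0} (hφ : LipschitzWith K φ)
    (ξ : E →L[ℝ] F) : Integrable (fun x => h x (ξ + fderiv ℝ φ x)) ν := by
  have hmeas : AEStronglyMeasurable (fun x => h x (ξ + fderiv ℝ φ x)) ν :=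
    aestronglyMeasurable_comp_of_ae_continuous hh.measurable
      (hν.ae_le (hh.lipschitz.mono fun _ hy => hy.continuous))
      ((measurable_fderiv ℝ φ).const_add ξ)
  have hbound : Integrable (fun x => b * (1 + ‖ξ + fderiv ℝ φ x‖)) ν :=
    ((integrable_const (1 : ℝ)).add (integrable_add_fderiv hφ ξ).norm).const_mul b
  refine hbound.mono' hmeas ?_
  filter_upwards [hν.ae_le hh.growth] with x hx
  obtain ⟨hlower, hupper⟩ := hx (ξ + fderiv ℝ φ x)
  have hnonneg : 0 ≤ h x (ξ + fderiv ℝ φ x) := le_trans (by have := hh.pos; positivity) hlower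
  rwa [Real.norm_of_nonneg hnonneg]

variable [μ.IsAddHaarMeasure]

lemma norm_le_cellEnergy_norm (hΩ : IsCellDomain μ Ω) (hφ : φ ∈ cellCompetitors S Ω)
    (ξ : E →L[ℝ] F) : ‖ξ‖ ≤ cellEnergy μ (fun _ η => ‖η‖) Ω ξ φ := by
  have := hΩ.isProbabilityMeasure_cond
  obtain ⟨⟨K, hK⟩, -, hzero⟩ := hφ
  have hmean : ∫ x, (ξ + fderiv ℝ φ x) ∂μ[|Ω] = ξ := by
    have hφ_int : Integrable (fderiv ℝ φ) μ[|Ω] := by simpa using integrable_add_fderiv hK 0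
    rw [integral_add (integrable_const ξ) hφ_int, hΩ.integral_cond_fderiv_eq_zero hK hzero]
    simp
  simpa only [hmean] using! norm_integral_le_integral_norm (μ := μ[|Ω]) fun x => ξ + fderiv ℝ φ x

namespace IsLinearGrowthIntegrand

lemma mul_cellEnergy_norm_le (hh : IsLinearGrowthIntegrand μ h a b L) (hΩ : IsCellDomain μ Ω)
    (hφ : φ ∈ cellCompetitors S Ω) (ξ : E →L[ℝ] F) :
    a * cellEnergy μ (fun _ η => ‖η‖) Ω ξ φ ≤ cellEnergy μ h Ω ξ φ := by
  have := hΩ.isProbabilityMeasure_cond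
  obtain ⟨⟨K, hK⟩, -⟩ := hφ
  have hac : μ[|Ω] ≪ μ := ProbabilityTheory.cond_absolutelyContinuous
  rw [cellEnergy, ← integral_const_mul]
  exact integral_mono_ae ((integrable_add_fderiv hK ξ).norm.const_mul a)
    (hh.integrable hac hK ξ) (hac.ae_le (hh.growth.mono fun x hx => (hx _).1))

lemma mul_norm_le_cellEnergy (hh : IsLinearGrowthIntegrand μ h a b L) (hΩ : IsCellDomain μ Ω)
    (hφ : φ ∈ cellCompetitors S Ω) (ξ : E →L[ℝ] F) : a * ‖ξ‖ ≤ cellEnergy μ h Ω ξ φ :=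
  (mul_le_mul_of_nonneg_left (norm_le_cellEnergy_norm hΩ hφ ξ) hh.pos.le).trans
    (hh.mul_cellEnergy_norm_le hΩ hφ ξ)

lemma cellEnergy_zero_le (hh : IsLinearGrowthIntegrand μ h a b L) (hΩ : IsCellDomain μ Ω)
    (ξ : E →L[ℝ] F) : cellEnergy μ h Ω ξ 0 ≤ b * (1 + ‖ξ‖) := by
  have := hΩ.isProbabilityMeasure_cond
  have hac : μ[|Ω] ≪ μ := ProbabilityTheory.cond_absolutelyContinuous
  calc cellEnergy μ h Ω ξ 0
      ≤ ∫ _, b * (1 + ‖ξ‖) ∂μ[|Ω] := by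
        refine integral_mono_ae (hh.integrable hac (LipschitzWith.const 0) ξ)
          (integrable_const _) (hac.ae_le (hh.growth.mono fun x hx => ?_))
        simpa using (hx ξ).2
    _ = b * (1 + ‖ξ‖) := by simp

lemma abs_cellEnergy_sub_le (hh : IsLinearGrowthIntegrand μ h a b L) (hΩ : IsCellDomain μ Ω)
    (hφ : φ ∈ cellCompetitors S Ω) (ξ ξ' : E →L[ℝ] F) :
    |cellEnergy μ h Ω ξ φ - cellEnergy μ h Ω ξ' φ| ≤ L * ‖ξ - ξ'‖ := by
  have := hΩ.isProbabilityMeasure_cond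
  obtain ⟨⟨K, hK⟩, -⟩ := hφ
  have hac : μ[|Ω] ≪ μ := ProbabilityTheory.cond_absolutelyContinuous
  rw [cellEnergy, cellEnergy, ← integral_sub (hh.integrable hac hK ξ) (hh.integrable hac hK ξ')]
  have hbound : ∀ᵐ x ∂μ[|Ω],
      ‖h x (ξ + fderiv ℝ φ x) - h x (ξ' + fderiv ℝ φ x)‖ ≤ L * ‖ξ - ξ'‖ := by
    filter_upwards [hac.ae_le hh.lipschitz] with x hx
    simpa only [add_sub_add_right_eq_sub] using
      hx.norm_sub_le (ξ + fderiv ℝ φ x) (ξ' + fderiv ℝ φ x)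
  simpa only [probReal_univ, mul_one] using!
    norm_integral_le_of_norm_le_const (μ := μ[|Ω]) hbound

lemma abs_cellEnergy_sub_cellEnergy_le (hh : IsLinearGrowthIntegrand μ h a b L)
    (hh' : IsLinearGrowthIntegrand μ h' a b L) (hΩ : IsCellDomain μ Ω)
    (hκ : ∀ᵐ y ∂μ, ∀ η, |h y η - h' y η| ≤ κ * ‖η‖)
    (hφ : φ ∈ cellCompetitors S Ω) (ξ : E →L[ℝ] F) :
    |cellEnergy μ h Ω ξ φ - cellEnergy μ h' Ω ξ φ| ≤
      κ * cellEnergy μ (fun _ η => ‖η‖) Ω ξ φ := by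
  have := hΩ.isProbabilityMeasure_cond
  obtain ⟨⟨K, hK⟩, -⟩ := hφ
  have hac : μ[|Ω] ≪ μ := ProbabilityTheory.cond_absolutelyContinuous
  simp only [cellEnergy]
  rw [← integral_sub (hh.integrable hac hK ξ) (hh'.integrable hac hK ξ), ← integral_const_mul,
    ← Real.norm_eq_abs]
  have hbound : Integrable (fun x => κ * ‖ξ + fderiv ℝ φ x‖) μ[|Ω] :=
    (integrable_add_fderiv hK ξ).norm.const_mul κ
  refine norm_integral_le_of_norm_le hbound ?_
  filter_upwards [hac.ae_le hκ] with x hx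
  exact hx (ξ + fderiv ℝ φ x)

lemma bddBelow_range_cellEnergy (hh : IsLinearGrowthIntegrand μ h a b L)
    (hΩ : IsCellDomain μ Ω) (S : Set F) (ξ : E →L[ℝ] F) :
    BddBelow (range fun φ : cellCompetitors S Ω => cellEnergy μ h Ω ξ φ) :=
  ⟨a * ‖ξ‖, forall_mem_range.2 fun φ => hh.mul_norm_le_cellEnergy hΩ φ.2 ξ⟩

lemma mul_norm_le_cellInf (hh : IsLinearGrowthIntegrand μ h a b L) (hΩ : IsCellDomain μ Ω)
    (hS : 0 ∈ S) (ξ : E →L[ℝ] F) : a * ‖ξ‖ ≤ cellInf μ h S Ω ξ :=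
  have : Nonempty (cellCompetitors S Ω) := ⟨0, zero_mem_cellCompetitors hS Ω⟩
  le_ciInf fun φ => hh.mul_norm_le_cellEnergy hΩ φ.2 ξ

lemma cellInf_le (hh : IsLinearGrowthIntegrand μ h a b L) (hΩ : IsCellDomain μ Ω)
    (hS : 0 ∈ S) (ξ : E →L[ℝ] F) : cellInf μ h S Ω ξ ≤ b * (1 + ‖ξ‖) :=
  (ciInf_le (hh.bddBelow_range_cellEnergy hΩ S ξ) ⟨0, zero_mem_cellCompetitors hS Ω⟩).trans
    (hh.cellEnergy_zero_le hΩ ξ)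

lemma abs_cellInf_sub_le (hh : IsLinearGrowthIntegrand μ h a b L) (hΩ : IsCellDomain μ Ω)
    (hS : 0 ∈ S) (ξ ξ' : E →L[ℝ] F) :
    |cellInf μ h S Ω ξ - cellInf μ h S Ω ξ'| ≤ L * ‖ξ - ξ'‖ :=
  have : Nonempty (cellCompetitors S Ω) := ⟨0, zero_mem_cellCompetitors hS Ω⟩
  abs_ciInf_sub_ciInf_le (hh.bddBelow_range_cellEnergy hΩ S ξ)
    (hh.bddBelow_range_cellEnergy hΩ S ξ') fun φ => hh.abs_cellEnergy_sub_le hΩ φ.2 ξ ξ'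

lemma cellInf_le_cellInf_add (hh : IsLinearGrowthIntegrand μ h a b L)
    (hh' : IsLinearGrowthIntegrand μ h' a b L) (hΩ : IsCellDomain μ Ω) (hS : 0 ∈ S)
    (hκ₀ : 0 ≤ κ) (hκ : ∀ᵐ y ∂μ, ∀ η, |h y η - h' y η| ≤ κ * ‖η‖) (ξ : E →L[ℝ] F) :
    cellInf μ h S Ω ξ ≤ cellInf μ h' S Ω ξ + κ / a * (b * (1 + ‖ξ‖)) := by
  have ha := hh.pos
  have henergy (φ : cellCompetitors S Ω) :
      cellEnergy μ h Ω ξ φ ≤ (1 + κ / a) * cellEnergy μ h' Ω ξ φ := by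
    have hdiff := (abs_sub_le_iff.1 (hh.abs_cellEnergy_sub_cellEnergy_le hh' hΩ hκ φ.2 ξ)).1
    have hcoercive : κ * cellEnergy μ (fun _ η => ‖η‖) Ω ξ φ ≤ κ / a * cellEnergy μ h' Ω ξ φ := by
      rw [div_mul_eq_mul_div, le_div_iff₀ ha, mul_assoc, mul_comm _ a]
      exact mul_le_mul_of_nonneg_left (hh'.mul_cellEnergy_norm_le hΩ φ.2 ξ) hκ₀
    linarith
  calc cellInf μ h S Ω ξ
      ≤ ⨅ φ : cellCompetitors S Ω, (1 + κ / a) * cellEnergy μ h' Ω ξ φ :=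
        ciInf_mono (hh.bddBelow_range_cellEnergy hΩ S ξ) henergy
    _ = cellInf μ h' S Ω ξ + κ / a * cellInf μ h' S Ω ξ := by
        rw [← Real.mul_iInf_of_nonneg (by positivity), ← cellInf]
        ring
    _ ≤ cellInf μ h' S Ω ξ + κ / a * (b * (1 + ‖ξ‖)) := by
        gcongr
        exact hh'.cellInf_le hΩ hS ξ

lemma abs_cellInf_sub_cellInf_le (hh : IsLinearGrowthIntegrand μ h a b L)
    (hh' : IsLinearGrowthIntegrand μ h' a b L) (hΩ : IsCellDomain μ Ω) (hS : 0 ∈ S)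
    (hκ₀ : 0 ≤ κ) (hκ : ∀ᵐ y ∂μ, ∀ η, |h y η - h' y η| ≤ κ * ‖η‖) (ξ : E →L[ℝ] F) :
    |cellInf μ h S Ω ξ - cellInf μ h' S Ω ξ| ≤ κ / a * (b * (1 + ‖ξ‖)) := by
  have hκ' : ∀ᵐ y ∂μ, ∀ η, |h' y η - h y η| ≤ κ * ‖η‖ := by simpa only [abs_sub_comm] using hκ
  exact abs_sub_le_iff.2
    ⟨sub_le_iff_le_add'.2 (hh.cellInf_le_cellInf_add hh' hΩ hS hκ₀ hκ ξ),
      sub_le_iff_le_add'.2 (hh'.cellInf_le_cellInf_add hh hΩ hS hκ₀ hκ' ξ)⟩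

variable {ι : Type*} {l : Filter ι} {Ω : ι → Set E}

lemma isBoundedUnder_le_cellInf (hh : IsLinearGrowthIntegrand μ h a b L)
    (hΩ : ∀ᶠ i in l, IsCellDomain μ (Ω i)) (hS : 0 ∈ S) (ξ : E →L[ℝ] F) :
    IsBoundedUnder (· ≤ ·) l fun i => cellInf μ h S (Ω i) ξ :=
  isBoundedUnder_of_eventually_le (hΩ.mono fun _ hi => hh.cellInf_le hi hS ξ)

lemma isBoundedUnder_ge_cellInf (hh : IsLinearGrowthIntegrand μ h a b L)
    (hΩ : ∀ᶠ i in l, IsCellDomain μ (Ω i)) (hS : 0 ∈ S) (ξ : E →L[ℝ] F) :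
    IsBoundedUnder (· ≥ ·) l fun i => cellInf μ h S (Ω i) ξ :=
  isBoundedUnder_of_eventually_ge (hΩ.mono fun _ hi => hh.mul_norm_le_cellInf hi hS ξ)

variable [l.NeBot]

lemma mul_norm_le_homDensity (hh : IsLinearGrowthIntegrand μ h a b L)
    (hΩ : ∀ᶠ i in l, IsCellDomain μ (Ω i)) (hS : 0 ∈ S) (ξ : E →L[ℝ] F) :
    a * ‖ξ‖ ≤ homDensity μ h S Ω l ξ :=
  le_limsup_of_frequently_le (hΩ.mono fun _ hi => hh.mul_norm_le_cellInf hi hS ξ).frequently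
    (hh.isBoundedUnder_le_cellInf hΩ hS ξ)

lemma homDensity_le (hh : IsLinearGrowthIntegrand μ h a b L)
    (hΩ : ∀ᶠ i in l, IsCellDomain μ (Ω i)) (hS : 0 ∈ S) (ξ : E →L[ℝ] F) :
    homDensity μ h S Ω l ξ ≤ b * (1 + ‖ξ‖) :=
  limsup_le_of_le (hh.isBoundedUnder_ge_cellInf hΩ hS ξ).isCoboundedUnder_le
    (hΩ.mono fun _ hi => hh.cellInf_le hi hS ξ)

lemma lipschitzWith_homDensity (hh : IsLinearGrowthIntegrand μ h a b L)
    (hΩ : ∀ᶠ i in l, IsCellDomain μ (Ω i)) (hS : 0 ∈ S) :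
    LipschitzWith L (homDensity μ h S Ω l) :=
  LipschitzWith.of_dist_le_mul fun ξ ξ' => by
    rw [Real.dist_eq, dist_eq_norm]
    exact abs_limsup_sub_limsup_le
      (hh.isBoundedUnder_le_cellInf hΩ hS ξ) (hh.isBoundedUnder_ge_cellInf hΩ hS ξ)
      (hh.isBoundedUnder_le_cellInf hΩ hS ξ') (hh.isBoundedUnder_ge_cellInf hΩ hS ξ')
      (hΩ.mono fun _ hi => hh.abs_cellInf_sub_le hi hS ξ ξ')

lemma abs_homDensity_sub_homDensity_le (hh : IsLinearGrowthIntegrand μ h a b L)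
    (hh' : IsLinearGrowthIntegrand μ h' a b L) (hΩ : ∀ᶠ i in l, IsCellDomain μ (Ω i))
    (hS : 0 ∈ S) (hκ₀ : 0 ≤ κ) (hκ : ∀ᵐ y ∂μ, ∀ η, |h y η - h' y η| ≤ κ * ‖η‖)
    (ξ : E →L[ℝ] F) :
    |homDensity μ h S Ω l ξ - homDensity μ h' S Ω l ξ| ≤ κ / a * (b * (1 + ‖ξ‖)) :=
  abs_limsup_sub_limsup_le
    (hh.isBoundedUnder_le_cellInf hΩ hS ξ) (hh.isBoundedUnder_ge_cellInf hΩ hS ξ)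
    (hh'.isBoundedUnder_le_cellInf hΩ hS ξ) (hh'.isBoundedUnder_ge_cellInf hΩ hS ξ)
    (hΩ.mono fun _ hi => hh.abs_cellInf_sub_cellInf_le hh' hi hS hκ₀ hκ ξ)

end IsLinearGrowthIntegrand

end CellProblem

section CutoffProjection

lemma lipschitzWith_smul_of_eq_zero_outside {X V : Type*} [PseudoMetricSpace X]
    [SeminormedAddCommGroup V] [NormedSpace ℝ V] {χ : X → ℝ} {A : X → V} {U : Set X}
    {K₁ K₂ : ℝ≥0} (hχ : LipschitzWith K₁ χ) (hχ_le : ∀ x, ‖χ x‖ ≤ 1)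
    (hχ_zero : ∀ x ∉ U, χ x = 0) (hA : LipschitzOnWith K₂ A U) (hA_le : ∀ x ∈ U, ‖A x‖ ≤ 1) :
    LipschitzWith (K₁ + K₂) fun x => χ x • A x := by
  have hχ_dist (x y : X) : ‖χ x - χ y‖ ≤ K₁ * dist x y := by
    simpa only [dist_eq_norm] using hχ.dist_le_mul x y
  have hsmul_le {x : X} (hx : x ∈ U) (r : ℝ) : ‖r • A x‖ ≤ ‖r‖ := by
    rw [norm_smul]
    exact mul_le_of_le_one_right (norm_nonneg r) (hA_le x hx)
  have hinside {x y : X} (hx : x ∈ U) :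
      ‖χ x • A x - χ y • A y‖ ≤ (K₁ + K₂) * dist x y := by
    by_cases hy : y ∈ U
    · have hA_dist : ‖χ y • (A x - A y)‖ ≤ K₂ * dist x y := by
        rw [norm_smul, ← dist_eq_norm]
        exact (mul_le_of_le_one_left dist_nonneg (hχ_le y)).trans (hA.dist_le_mul x hx y hy)
      calc ‖χ x • A x - χ y • A y‖
          = ‖(χ x - χ y) • A x + χ y • (A x - A y)‖ := by congr 1; module
        _ ≤ ‖(χ x - χ y) • A x‖ + ‖χ y • (A x - A y)‖ := norm_add_le _ _
        _ ≤ K₁ * dist x y + K₂ * dist x y :=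
          add_le_add ((hsmul_le hx _).trans (hχ_dist x y)) hA_dist
        _ = (K₁ + K₂) * dist x y := by ring
    · calc ‖χ x • A x - χ y • A y‖
          = ‖(χ x - χ y) • A x‖ := by simp [hχ_zero y hy]
        _ ≤ K₁ * dist x y := (hsmul_le hx _).trans (hχ_dist x y)
        _ ≤ (K₁ + K₂) * dist x y := by gcongr; exact le_add_of_nonneg_right K₂.2
  refine LipschitzWith.of_dist_le_mul fun x y => ?_
  rw [dist_eq_norm, NNReal.coe_add]
  by_cases hx : x ∈ U
  · exact hinside hx
  by_cases hy : y ∈ U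
  · rw [norm_sub_rev, dist_comm]
    exact hinside hy
  · simp only [hχ_zero x hx, hχ_zero y hy, zero_smul, sub_self, norm_zero]
    positivity

namespace ProjData

variable {d : ℕ} {M : Set (EN d)} (D : ProjData M) {s : EN d}

/-- The operator `χ(s) P_{Π(s)}` on `ℝ^d`, so that `ℙ_s(ξ)` is its composition with `ξ`. -/
noncomputable def cutoffTanProj (s : EN d) : EN d →L[ℝ] EN d :=
  D.chi s • D.tanProj (D.pr s)

lemma norm_tanProj_le (hs : s ∈ M) : ‖D.tanProj s‖ ≤ 1 := by
  have hproj : (D.tanProj s : EN d →ₗ[ℝ] EN d).IsSymmetricProjection :=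
    ⟨LinearMap.ext fun v => D.tanProj_id s hs _ (D.tanProj_mem s hs v), D.tanProj_symm s hs⟩
  exact (ContinuousLinearMap.isStarProjection_iff_isSymmetricProjection.2 hproj).norm_le

lemma norm_chi_le (s : EN d) : ‖D.chi s‖ ≤ 1 := by
  rw [Real.norm_of_nonneg (D.chi_range s).1]
  exact (D.chi_range s).2

lemma chi_eq_zero_of_le_infDist (hs : D.δ₀ ≤ Metric.infDist s M) : D.chi s = 0 :=
  D.chi_zero s (by linarith [D.δ₀_pos])

lemma norm_cutoffTanProj_le (s : EN d) : ‖D.cutoffTanProj s‖ ≤ 1 := by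
  rw [cutoffTanProj, norm_smul]
  rcases lt_or_ge (Metric.infDist s M) D.δ₀ with hs | hs
  · exact mul_le_one₀ (D.norm_chi_le s) (norm_nonneg _) (D.norm_tanProj_le (D.pr_mem s hs))
  · simp [D.chi_eq_zero_of_le_infDist hs]

lemma exists_lipschitzWith_cutoffTanProj : ∃ K, LipschitzWith K D.cutoffTanProj := by
  obtain ⟨K₁, hK₁⟩ := D.chi_smooth.lipschitzWith_of_hasCompactSupport D.chi_supp (by simp)
  obtain ⟨K₂, hK₂⟩ := D.tanProj_lip
  exact ⟨K₁ + K₂, lipschitzWith_smul_of_eq_zero_outside hK₁ D.norm_chi_le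
    (fun s hs => D.chi_eq_zero_of_le_infDist (not_lt.1 hs)) hK₂
    fun s hs => D.norm_tanProj_le (D.pr_mem s hs)⟩

end ProjData

end CutoffProjection

section ProjectedIntegrand

variable {E F : Type*} [NormedAddCommGroup E] [NormedSpace ℝ E] [NormedAddCommGroup F]
  [NormedSpace ℝ F]

/-- The integrand `f(y, Tξ) + |ξ - Tξ|` obtained from `f` by prescribing the tangential part `Tξ`
of the gradient; for `T = χ(s) P_{Π(s)}` it is the modified integrand `g(y, s, ξ)`. -/
noncomputable def projectedIntegrand (f : E → (E →L[ℝ] F) → ℝ) (T : F →L[ℝ] F) (y : E)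
    (ξ : E →L[ℝ] F) : ℝ :=
  f y (T.comp ξ) + ‖ξ - T.comp ξ‖

variable {T : F →L[ℝ] F}

lemma norm_comp_le_of_norm_le_one (hT : ‖T‖ ≤ 1) (ξ : E →L[ℝ] F) : ‖T.comp ξ‖ ≤ ‖ξ‖ :=
  (T.opNorm_comp_le ξ).trans (mul_le_of_le_one_left (norm_nonneg ξ) hT)

lemma lipschitzWith_comp_of_norm_le_one (hT : ‖T‖ ≤ 1) :
    LipschitzWith 1 fun ξ : E →L[ℝ] F => T.comp ξ :=
  LipschitzWith.of_dist_le_mul fun ξ ξ' => by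
    simpa [dist_eq_norm] using norm_comp_le_of_norm_le_one hT (ξ - ξ')

variable [MeasurableSpace E] {μ : Measure E} {f : E → (E →L[ℝ] F) → ℝ} {a b : ℝ} {L : ℝ≥0}

namespace IsLinearGrowthIntegrand

lemma projected (hf : IsLinearGrowthIntegrand μ f a b L) (hT : ‖T‖ ≤ 1) :
    IsLinearGrowthIntegrand μ (projectedIntegrand f T) (min a 1) (b + 2) (L + 2) where
  measurable ξ := (hf.measurable (T.comp ξ)).add_const _
  pos := lt_min hf.pos one_pos
  growth := by
    filter_upwards [hf.growth] with y hy ξ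
    have hb : 0 ≤ b := by simpa using (hy 0).1.trans (hy 0).2
    have hTξ := norm_comp_le_of_norm_le_one hT ξ
    constructor
    · calc min a 1 * ‖ξ‖
          = min a 1 * ‖T.comp ξ + (ξ - T.comp ξ)‖ := by rw [add_sub_cancel]
        _ ≤ min a 1 * (‖T.comp ξ‖ + ‖ξ - T.comp ξ‖) :=
          mul_le_mul_of_nonneg_left (norm_add_le _ _) (lt_min hf.pos one_pos).le
        _ ≤ a * ‖T.comp ξ‖ + 1 * ‖ξ - T.comp ξ‖ := by
          rw [mul_add]
          gcongr
          exacts [min_le_left a 1, min_le_right a 1]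
        _ ≤ f y (T.comp ξ) + ‖ξ - T.comp ξ‖ := by
          rw [one_mul]
          gcongr
          exact (hy _).1
    · calc f y (T.comp ξ) + ‖ξ - T.comp ξ‖
          ≤ b * (1 + ‖T.comp ξ‖) + (‖ξ‖ + ‖T.comp ξ‖) := add_le_add (hy _).2 (norm_sub_le _ _)
        _ ≤ b * (1 + ‖ξ‖) + (‖ξ‖ + ‖ξ‖) := by gcongr
        _ ≤ (b + 2) * (1 + ‖ξ‖) := by linarith
  lipschitz := by
    filter_upwards [hf.lipschitz] with y hy
    have hcomp := lipschitzWith_comp_of_norm_le_one (E := E) hT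
    have hnorm := lipschitzWith_one_norm.comp (LipschitzWith.id.sub hcomp)
    refine ((hy.comp hcomp).add hnorm).weaken (le_of_eq ?_)
    rw [mul_one, one_mul, one_add_one_eq_two]

lemma abs_projectedIntegrand_sub_le (hf : IsLinearGrowthIntegrand μ f a b L) (T T' : F →L[ℝ] F) :
    ∀ᵐ y ∂μ, ∀ η, |projectedIntegrand f T y η - projectedIntegrand f T' y η| ≤
      (L + 1) * ‖T - T'‖ * ‖η‖ := by
  filter_upwards [hf.lipschitz] with y hy η
  have hcomp : ‖T.comp η - T'.comp η‖ ≤ ‖T - T'‖ * ‖η‖ := by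
    rw [← ContinuousLinearMap.sub_comp]
    exact (T - T').opNorm_comp_le η
  have hnorm : |‖η - T.comp η‖ - ‖η - T'.comp η‖| ≤ ‖T.comp η - T'.comp η‖ := by
    simpa [norm_sub_rev] using abs_norm_sub_norm_le (η - T.comp η) (η - T'.comp η)
  calc |f y (T.comp η) + ‖η - T.comp η‖ - (f y (T'.comp η) + ‖η - T'.comp η‖)|
      ≤ |f y (T.comp η) - f y (T'.comp η)| + |‖η - T.comp η‖ - ‖η - T'.comp η‖| := by
        rw [add_sub_add_comm]
        exact abs_add_le _ _
    _ ≤ L * ‖T.comp η - T'.comp η‖ + ‖T.comp η - T'.comp η‖ :=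
        add_le_add (hy.norm_sub_le _ _) hnorm
    _ = (L + 1) * ‖T.comp η - T'.comp η‖ := by ring
    _ ≤ (L + 1) * (‖T - T'‖ * ‖η‖) := by gcongr
    _ = (L + 1) * ‖T - T'‖ * ‖η‖ := by ring

end IsLinearGrowthIntegrand

end ProjectedIntegrand

section Homogenization

variable {N d : ℕ} {M : Set (EN d)} {f : EN N → Mat d N → ℝ} {α β : ℝ} {t : ℝ}

lemma posCube_eq_preimage (N : ℕ) (t : ℝ) :
    posCube N t = (WithLp.ofLp : EN N → Fin N → ℝ) ⁻¹' univ.pi fun _ => Ioo 0 t := by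
  ext x
  simp [posCube]

lemma volume_posCube (N : ℕ) (t : ℝ) : volume (posCube N t) = ENNReal.ofReal t ^ N := by
  rw [posCube_eq_preimage, (PiLp.volume_preserving_ofLp (Fin N)).measure_preimage
    (MeasurableSet.univ_pi fun _ => measurableSet_Ioo).nullMeasurableSet]
  simp [Real.volume_pi_Ioo]

lemma isCellDomain_posCube (ht : 0 < t) : IsCellDomain volume (posCube N t) where
  isBounded := by
    rw [posCube_eq_preimage]
    exact (PiLp.antilipschitzWith_ofLp 2 fun _ : Fin N => ℝ).isBounded_preimage
      (Bornology.IsBounded.pi fun _ => Metric.isBounded_Ioo 0 t)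
  measure_ne_zero := by
    rw [volume_posCube]
    exact pow_ne_zero N (ENNReal.ofReal_pos.2 ht).ne'
  measure_frontier := by
    rw [posCube_eq_preimage]
    exact ((convex_pi fun _ _ => convex_Ioo 0 t).linear_preimage
      (WithLp.linearEquiv 2 ℝ (Fin N → ℝ)).toLinearMap).addHaar_frontier volume

lemma eventually_isCellDomain_posCube (N : ℕ) :
    ∀ᶠ t in atTop, IsCellDomain volume (posCube N t) :=
  (eventually_gt_atTop 0).mono fun _ => isCellDomain_posCube

lemma cellEnergy_posCube (f : EN N → Mat d N → ℝ) (ξ : Mat d N) (φ : EN N → EN d) (ht : 0 ≤ t) :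
    cellEnergy volume f (posCube N t) ξ φ =
      (t ^ N)⁻¹ * ∫ x in posCube N t, f x (ξ + fderiv ℝ φ x) := by
  rw [cellEnergy, ProbabilityTheory.cond, integral_smul_measure, volume_posCube,
    ENNReal.toReal_inv, ENNReal.toReal_pow, ENNReal.toReal_ofReal ht, smul_eq_mul]

lemma tanCell_eq_cellInf (f : EN N → Mat d N → ℝ) (M : Set (EN d)) (s : EN d) (ξ : Mat d N)
    (ht : 0 ≤ t) : tanCell f M s ξ t = cellInf volume f (TangentSet M s) (posCube N t) ξ := by
  rw [tanCell, cellInf, iInf]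
  congr 1
  ext c
  simp only [cellEnergy_posCube f ξ _ ht, cellCompetitors, mem_range, Subtype.exists, mem_ofPred_eq,
    exists_prop, eq_comm (a := c), ← exists_and_right, and_assoc]

lemma freeCell_eq_cellInf (f : EN N → Mat d N → ℝ) (ξ : Mat d N) (ht : 0 ≤ t) :
    freeCell f ξ t = cellInf volume f univ (posCube N t) ξ := by
  rw [freeCell, cellInf, iInf]
  congr 1
  ext c
  simp only [cellEnergy_posCube f ξ _ ht, cellCompetitors, mem_range, Subtype.exists, mem_ofPred_eq,
    exists_prop, eq_comm (a := c), ← exists_and_right, and_assoc, mem_univ, forall_const, true_and]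

lemma Tfhom_eq_homDensity (f : EN N → Mat d N → ℝ) (M : Set (EN d)) (s : EN d) (ξ : Mat d N) :
    Tfhom f M s ξ = homDensity volume f (TangentSet M s) (posCube N) atTop ξ :=
  limsup_congr ((eventually_ge_atTop 0).mono fun _ ht => tanCell_eq_cellInf f M s ξ ht)

lemma ghomOf_gOf_eq_homDensity (D : ProjData M) (f : EN N → Mat d N → ℝ) (s : EN d)
    (ξ : Mat d N) :
    ghomOf (gOf D f) s ξ =
      homDensity volume (projectedIntegrand f (D.cutoffTanProj s)) univ (posCube N) atTop ξ :=
  limsup_congr ((eventually_ge_atTop 0).mono fun _ ht => freeCell_eq_cellInf _ ξ ht)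

lemma zero_mem_tangentSet {s : EN d} (hs : s ∈ M) : 0 ∈ TangentSet M s :=
  ⟨fun _ => s, fun _ => hs, rfl, hasDerivAt_const 0 s⟩

lemma StdIntegrand.isLinearGrowthIntegrand {L : ℝ} (hf : StdIntegrand N d f α β L) :
    IsLinearGrowthIntegrand volume f α β L.toNNReal where
  measurable := hf.meas
  pos := hf.alpha_pos
  growth := hf.growth
  lipschitz := hf.lip.mono fun y hy => LipschitzWith.of_dist_le_mul fun ξ ξ' => by
    simpa [Real.dist_eq, dist_eq_norm, hf.lip_pos.le] using hy ξ ξ'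

variable {L : ℝ≥0}

lemma lipschitzWith_ghomOf_gOf (hf : IsLinearGrowthIntegrand volume f α β L) (D : ProjData M)
    (s : EN d) : LipschitzWith (L + 2) fun ξ => ghomOf (gOf D f) s ξ := by
  simp only [ghomOf_gOf_eq_homDensity]
  exact (hf.projected (D.norm_cutoffTanProj_le s)).lipschitzWith_homDensity
    (eventually_isCellDomain_posCube N) (mem_univ 0)

lemma exists_abs_ghomOf_gOf_sub_le (hf : IsLinearGrowthIntegrand volume f α β L)
    (D : ProjData M) : ∃ C : ℝ, 0 < C ∧ ∀ (s s' : EN d) (ξ : Mat d N),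
      |ghomOf (gOf D f) s ξ - ghomOf (gOf D f) s' ξ| ≤ C * ‖s - s'‖ * (1 + ‖ξ‖) := by
  obtain ⟨K, hK⟩ := D.exists_lipschitzWith_cutoffTanProj
  set c := (L + 1) * K / min α 1 * (β + 2)
  refine ⟨|c| + 1, by positivity, fun s s' ξ => ?_⟩
  have hκ : ∀ᵐ y, ∀ η, |projectedIntegrand f (D.cutoffTanProj s) y η -
      projectedIntegrand f (D.cutoffTanProj s') y η| ≤ (L + 1) * (K * ‖s - s'‖) * ‖η‖ := by
    filter_upwards [hf.abs_projectedIntegrand_sub_le (D.cutoffTanProj s) (D.cutoffTanProj s')]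
      with y hy η
    exact (hy η).trans (by gcongr; exact hK.norm_sub_le s s')
  simp only [ghomOf_gOf_eq_homDensity]
  calc _ ≤ (L + 1) * (K * ‖s - s'‖) / min α 1 * ((β + 2) * (1 + ‖ξ‖)) :=
        (hf.projected (D.norm_cutoffTanProj_le s)).abs_homDensity_sub_homDensity_le
          (hf.projected (D.norm_cutoffTanProj_le s'))
          (eventually_isCellDomain_posCube N) (mem_univ 0) (by positivity) hκ ξ
    _ = c * ‖s - s'‖ * (1 + ‖ξ‖) := by ring
    _ ≤ (|c| + 1) * ‖s - s'‖ * (1 + ‖ξ‖) := by gcongr; linarith [le_abs_self c]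

lemma continuous_ghomOf_gOf (hf : IsLinearGrowthIntegrand volume f α β L) (D : ProjData M) :
    Continuous fun p : EN d × Mat d N => ghomOf (gOf D f) p.1 p.2 := by
  refine continuous_prod_of_continuous_lipschitzWith' _ (L + 2)
    (lipschitzWith_ghomOf_gOf hf D) fun ξ => ?_
  obtain ⟨C, -, hC⟩ := exists_abs_ghomOf_gOf_sub_le hf D
  refine (LipschitzWith.of_dist_le' (K := C * (1 + ‖ξ‖)) fun s s' => ?_).continuous
  rw [Real.dist_eq, dist_eq_norm, mul_right_comm]
  exact hC s s' ξ

theorem statement_7_general (hf : IsLinearGrowthIntegrand volume f α β L) (D : ProjData M) :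
    (∃ C : ℝ, 0 < C ∧ ∀ s ∈ M, ∀ ξ ξ' : Mat d N,
        α * ‖ξ‖ ≤ Tfhom f M s ξ ∧ Tfhom f M s ξ ≤ β * (1 + ‖ξ‖) ∧
        |Tfhom f M s ξ - Tfhom f M s ξ'| ≤ C * ‖ξ - ξ'‖) ∧
    (∃ C₁ : ℝ, 0 < C₁ ∧ ∀ (s s' : EN d) (ξ : Mat d N),
      |ghomOf (gOf D f) s ξ - ghomOf (gOf D f) s' ξ| ≤ C₁ * ‖s - s'‖ * (1 + ‖ξ‖)) ∧
    Continuous (fun p : EN d × Mat d N => ghomOf (gOf D f) p.1 p.2) := by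
  refine ⟨⟨L + 1, by positivity, fun s hs ξ ξ' => ?_⟩, exists_abs_ghomOf_gOf_sub_le hf D,
    continuous_ghomOf_gOf hf D⟩
  have hcube := eventually_isCellDomain_posCube N
  have hzero := zero_mem_tangentSet hs
  simp only [Tfhom_eq_homDensity]
  refine ⟨hf.mul_norm_le_homDensity hcube hzero ξ, hf.homDensity_le hcube hzero ξ, ?_⟩
  have hlip := (hf.lipschitzWith_homDensity hcube hzero).weaken (le_self_add : L ≤ L + 1)
  exact hlip.norm_sub_le ξ ξ'

end Homogenization

/-- Growth and Lipschitz estimates for `Tf_hom`: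
coercivity/linear growth with the constants `α, β`, Lipschitz continuity in
`ξ`, and — for the extension of `Tf_hom` by the homogenized density of the
modified integrand `g` — Lipschitz continuity in `s` and global continuity. -/
theorem statement_7
    (N d : ℕ) (M : Set (EN d)) (hM : IsNiceManifold d M)
    (f : EN N → Mat d N → ℝ) (α β L : ℝ) (hf : StdIntegrand N d f α β L)
    (D : ProjData M) :
    (∃ C : ℝ, 0 < C ∧
      ∀ s ∈ M, ∀ ξ ξ' : Mat d N, TangentCols M s ξ → TangentCols M s ξ' →
        α * ‖ξ‖ ≤ Tfhom f M s ξ ∧ Tfhom f M s ξ ≤ β * (1 + ‖ξ‖) ∧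
        |Tfhom f M s ξ - Tfhom f M s ξ'| ≤ C * ‖ξ - ξ'‖) ∧
    (∃ C₁ : ℝ, 0 < C₁ ∧ ∀ (s s' : EN d) (ξ : Mat d N),
      |ghomOf (gOf D f) s ξ - ghomOf (gOf D f) s' ξ| ≤ C₁ * ‖s - s'‖ * (1 + ‖ξ‖)) ∧
    Continuous (fun p : EN d × Mat d N => ghomOf (gOf D f) p.1 p.2) :=
  have ⟨⟨C, hC, hT⟩, hg⟩ := statement_7_general hf.isLinearGrowthIntegrand D
  ⟨⟨C, hC, fun s hs ξ ξ' _ _ => hT s hs ξ ξ'⟩, hg⟩
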